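/- arXiv:math/0108043 — 2 statements merged into one kernel-verified Lean document; each statement's English description precedes it below -/
import Mathlib

section
/- Let F(X) = Σ_{n≥0} |{π ∈ S_n : π avoids the patterns 132, 1234 and 2134}|·Xⁿ ∈ ℚ⟦X⟧. Then (1 − 2X − X²)·F(X) = 1 − X − X². -/
/-- A pattern is a permutation of `{1,…,k}` for some `k`. -/
def Pattern : Type := Σ k : ℕ, Equiv.Perm (Fin k)

/-- `IsOccurrence τ π f` says that the strictly increasing tuple of indices `f` is an
occurrence of the pattern `τ` in the permutation `π`, i.e. `π ∘ f` is order-isomorphic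
to `τ`. -/
def IsOccurrence {k n : ℕ} (τ : Equiv.Perm (Fin k)) (π : Equiv.Perm (Fin n))
    (f : Fin k → Fin n) : Prop :=
  StrictMono f ∧ ∀ a b : Fin k, τ a < τ b ↔ π (f a) < π (f b)

/-- `π` contains the pattern `τ` (at least once). -/
def Contains {k n : ℕ} (τ : Equiv.Perm (Fin k)) (π : Equiv.Perm (Fin n)) : Prop :=
  ∃ f : Fin k → Fin n, IsOccurrence τ π f

/-- `π` contains the pattern `τ` exactly once. -/
def ContainsOnce {k n : ℕ} (τ : Equiv.Perm (Fin k)) (π : Equiv.Perm (Fin n)) : Prop :=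
  ∃! f : Fin k → Fin n, IsOccurrence τ π f

/-- `π` avoids every pattern in the set `T`. -/
def AvoidsSet {n : ℕ} (T : Set Pattern) (π : Equiv.Perm (Fin n)) : Prop :=
  ∀ p ∈ T, ¬ Contains p.2 π

/-- `f_T(n)`: the number of permutations of `{1,…,n}` avoiding every pattern in `T`. -/
noncomputable def avoidCount (T : Set Pattern) (n : ℕ) : ℕ :=
  Nat.card {π : Equiv.Perm (Fin n) // AvoidsSet T π}

/-- The pattern `132 ∈ S₃` (zero-indexed: `0 ↦ 0, 1 ↦ 2, 2 ↦ 1`). -/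
noncomputable def p132 : Equiv.Perm (Fin 3) := Equiv.ofBijective ![0, 2, 1] (by decide)

/-- The pattern `1234 ∈ S₄` (the identity). -/
noncomputable def p1234 : Equiv.Perm (Fin 4) := Equiv.ofBijective ![0, 1, 2, 3] (by decide)

/-- The pattern `2134 ∈ S₄` (zero-indexed: `0↦1, 1↦0, 2↦2, 3↦3`). -/
noncomputable def p2134 : Equiv.Perm (Fin 4) := Equiv.ofBijective ![1, 0, 2, 3] (by decide)

/-- Unfolded avoidance. -/
def Good {n : ℕ} (π : Equiv.Perm (Fin n)) : Prop :=
  (∀ i j k : Fin n, i < j → j < k → (π i).val < (π k).val → (π k).val < (π j).val → False) ∧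
  (∀ i j k l : Fin n, i < j → j < k → k < l → (π i).val < (π k).val → (π j).val < (π k).val →
    (π k).val < (π l).val → False)

theorem good_iff {n : ℕ} (π : Equiv.Perm (Fin n)) :
    (¬ Contains p132 π ∧ ¬ Contains p1234 π ∧ ¬ Contains p2134 π) ↔ Good π := by
  constructor
  · rintro ⟨h1, h2, h3⟩
    constructor
    · intro i j k hij hjk hik hkj
      apply h1
      refine ⟨![i, j, k], ?_, ?_⟩
      · rw [Fin.strictMono_iff_lt_succ]
        intro a
        fin_cases a <;> simp [hij, hjk]
      · intro a b
        fin_cases a <;> fin_cases b <;> simp [p132] <;> omega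
    · intro i j k l hij hjk hkl hik hjk' hkl'
      have hne : (π i).val ≠ (π j).val := by
        intro h
        exact hij.ne (π.injective (Fin.ext h))
      rcases lt_or_gt_of_ne hne with h | h
      · apply h2
        refine ⟨![i, j, k, l], ?_, ?_⟩
        · rw [Fin.strictMono_iff_lt_succ]
          intro a
          fin_cases a <;> simp [hij, hjk, hkl]
        · intro a b
          fin_cases a <;> fin_cases b <;> simp [p1234] <;> omega
      · apply h3
        refine ⟨![i, j, k, l], ?_, ?_⟩
        · rw [Fin.strictMono_iff_lt_succ]
          intro a
          fin_cases a <;> simp [hij, hjk, hkl]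
        · intro a b
          fin_cases a <;> fin_cases b <;> simp [p2134] <;> omega
  · rintro ⟨h1, h2⟩
    refine ⟨?_, ?_, ?_⟩
    · rintro ⟨f, hf, h⟩
      exact h1 (f 0) (f 1) (f 2) (hf (by decide)) (hf (by decide))
        ((h 0 2).1 (by simp [p132])) ((h 2 1).1 (by simp [p132]))
    · rintro ⟨f, hf, h⟩
      exact h2 (f 0) (f 1) (f 2) (f 3) (hf (by decide)) (hf (by decide)) (hf (by decide))
        ((h 0 2).1 (by simp [p1234])) ((h 1 2).1 (by simp [p1234])) ((h 2 3).1 (by simp [p1234]))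
    · rintro ⟨f, hf, h⟩
      exact h2 (f 0) (f 1) (f 2) (f 3) (hf (by decide)) (hf (by decide)) (hf (by decide))
        ((h 0 2).1 (by simp [p2134])) ((h 1 2).1 (by simp [p2134])) ((h 2 3).1 (by simp [p2134]))

/-- Insert the value `p` in front. -/
def ins {n : ℕ} (p : Fin (n + 1)) (σ : Equiv.Perm (Fin n)) : Equiv.Perm (Fin (n + 1)) :=
  (finSuccEquiv n).trans ((Equiv.optionCongr σ).trans (finSuccEquiv' p).symm)

theorem ins_zero {n : ℕ} (p : Fin (n + 1)) (σ : Equiv.Perm (Fin n)) : ins p σ 0 = p := by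
  simp [ins]

theorem ins_succ {n : ℕ} (p : Fin (n + 1)) (σ : Equiv.Perm (Fin n)) (i : Fin n) :
    ins p σ i.succ = p.succAbove (σ i) := by
  simp [ins]

theorem ins_succ_val {n : ℕ} (p : Fin (n + 1)) (σ : Equiv.Perm (Fin n)) (i : Fin n) :
    (ins p σ i.succ).val = if (σ i).val < p.val then (σ i).val else (σ i).val + 1 := by
  rw [ins_succ, Fin.succAbove]
  simp only [Fin.lt_def, Fin.val_castSucc]
  split_ifs <;> simp

theorem ins_inj {n : ℕ} {p q : Fin (n + 1)} {σ τ : Equiv.Perm (Fin n)}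
    (h : ins p σ = ins q τ) : p = q ∧ σ = τ := by
  have h0 : p = q := by rw [← ins_zero p σ, h, ins_zero]
  subst h0
  refine ⟨rfl, ?_⟩
  ext i : 1
  have := congrArg (fun f => f i.succ) h
  simp only [ins_succ] at this
  exact Fin.succAbove_right_injective this

theorem ins_surj {n : ℕ} (π : Equiv.Perm (Fin (n + 1))) :
    ∃ p σ, π = ins p σ := by
  have hb : Function.Bijective
      (fun x : Fin (n + 1) × Equiv.Perm (Fin n) => ins x.1 x.2) := by
    rw [Fintype.bijective_iff_injective_and_card]
    refine ⟨?_, ?_⟩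
    · rintro ⟨p, σ⟩ ⟨q, τ⟩ h
      obtain ⟨h1, h2⟩ := ins_inj h
      exact Prod.ext h1 h2
    · simp [Fintype.card_perm, Nat.factorial_succ]
  obtain ⟨⟨p, σ⟩, h⟩ := hb.2 π
  exact ⟨p, σ, h.symm⟩

theorem ins_succ_lt {n : ℕ} (p : Fin (n + 1)) (σ : Equiv.Perm (Fin n)) (i j : Fin n) :
    (ins p σ i.succ).val < (ins p σ j.succ).val ↔ (σ i).val < (σ j).val := by
  rw [ins_succ_val, ins_succ_val]
  split_ifs <;> omega

theorem good_of_ins {n : ℕ} {p : Fin (n + 1)} {σ : Equiv.Perm (Fin n)} (h : Good (ins p σ)) :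
    Good σ := by
  obtain ⟨h1, h2⟩ := h
  constructor
  · intro i j k hij hjk a b
    exact h1 i.succ j.succ k.succ (by simpa) (by simpa) ((ins_succ_lt ..).2 a)
      ((ins_succ_lt ..).2 b)
  · intro i j k l hij hjk hkl a b c
    exact h2 i.succ j.succ k.succ l.succ (by simpa) (by simpa) (by simpa) ((ins_succ_lt ..).2 a)
      ((ins_succ_lt ..).2 b) ((ins_succ_lt ..).2 c)

/-- Patterns only need checking when they start at the front. -/
theorem good_ins {n : ℕ} {p : Fin (n + 1)} {σ : Equiv.Perm (Fin n)} (h : Good σ)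
    (ha : ∀ j k : Fin n, j < k → p.val ≤ (σ k).val → (σ k).val < (σ j).val → False)
    (hb : ∀ j k l : Fin n, j < k → k < l → p.val ≤ (σ k).val → (σ j).val < (σ k).val →
      (σ k).val < (σ l).val → False) : Good (ins p σ) := by
  obtain ⟨h1, h2⟩ := h
  have key : ∀ k : Fin n, p.val < (ins p σ k.succ).val → p.val ≤ (σ k).val := by
    intro k
    rw [ins_succ_val]
    split_ifs <;> omega
  constructor
  · intro i j k hij hjk a b
    obtain ⟨j, rfl⟩ := Fin.exists_succ_eq.2 (Fin.ne_zero_of_lt hij)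
    obtain ⟨k, rfl⟩ := Fin.exists_succ_eq.2 (Fin.ne_zero_of_lt hjk)
    rw [ins_succ_lt] at b
    induction i using Fin.cases with
    | zero =>
      rw [ins_zero] at a
      exact ha j k (by simpa using hjk) (key _ a) b
    | succ i =>
      rw [ins_succ_lt] at a
      exact h1 i j k (by simpa using hij) (by simpa using hjk) a b
  · intro i j k l hij hjk hkl a b c
    obtain ⟨j, rfl⟩ := Fin.exists_succ_eq.2 (Fin.ne_zero_of_lt hij)
    obtain ⟨k, rfl⟩ := Fin.exists_succ_eq.2 (Fin.ne_zero_of_lt hjk)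
    obtain ⟨l, rfl⟩ := Fin.exists_succ_eq.2 (Fin.ne_zero_of_lt hkl)
    rw [ins_succ_lt] at b c
    induction i using Fin.cases with
    | zero =>
      rw [ins_zero] at a
      exact hb j k l (by simpa using hjk) (by simpa using hkl) (key _ a) b c
    | succ i =>
      rw [ins_succ_lt] at a
      exact h2 i j k l (by simpa using hij) (by simpa using hjk) (by simpa using hkl) a b c

theorem good_ins_top {n : ℕ} {p : Fin (n + 1)} {σ : Equiv.Perm (Fin n)} (h : Good σ)
    (hp : n ≤ p.val + 1) : Good (ins p σ) := by
  apply good_ins h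
  · intro j k _ a b
    have := (σ j).isLt
    omega
  · intro j k l _ _ a b c
    have := (σ l).isLt
    omega

theorem good_ins_two {m : ℕ} {p : Fin (m + 3)} {q : Fin (m + 2)} {τ : Equiv.Perm (Fin (m + 1))}
    (h : Good τ) (hp : p.val = m) (hq : q.val = m) : Good (ins p (ins q τ)) := by
  have key : ∀ k : Fin (m + 1), m ≤ (ins q τ k.succ).val → (ins q τ k.succ).val = m + 1 := by
    intro k
    have := (τ k).isLt
    rw [ins_succ_val]
    split_ifs <;> omega
  have h0 : (ins q τ 0).val = m := by rw [ins_zero, hq]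
  apply good_ins (good_ins_top h (by omega))
  · intro j k hjk a b
    obtain ⟨k, rfl⟩ := Fin.exists_succ_eq.2 (Fin.ne_zero_of_lt hjk)
    have := key k (by omega)
    have := (ins q τ j).isLt
    omega
  · intro j k l hjk hkl a b c
    obtain ⟨k, rfl⟩ := Fin.exists_succ_eq.2 (Fin.ne_zero_of_lt hjk)
    have := key k (by omega)
    have := (ins q τ l).isLt
    omega

theorem exhaust {m : ℕ} {p : Fin (m + 3)} {σ : Equiv.Perm (Fin (m + 2))}
    (h : Good (ins p σ)) (hp : p.val ≤ m) : p.val = m ∧ (σ 0).val = m := by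
  obtain ⟨h1, h2⟩ := h
  have up : ∀ k, p.val ≤ (σ k).val → (ins p σ 0).val < (ins p σ k.succ).val := by
    intro k hk
    rw [ins_zero, ins_succ_val]
    split_ifs <;> omega
  have ord : ∀ a b, p.val ≤ (σ a).val → (σ a).val < (σ b).val → a < b := by
    intro a b ha hab
    by_contra hc
    have hne : a ≠ b := by rintro rfl; omega
    have hlt : b < a := lt_of_le_of_ne (not_lt.1 hc) hne.symm
    exact h1 0 b.succ a.succ (Fin.succ_pos _) (by simpa using hlt) (up a ha)
      ((ins_succ_lt ..).2 hab)
  obtain ⟨a, ha⟩ := σ.surjective ⟨m, by omega⟩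
  obtain ⟨b, hb⟩ := σ.surjective ⟨m + 1, by omega⟩
  have ha' : (σ a).val = m := by rw [ha]
  have hb' : (σ b).val = m + 1 := by rw [hb]
  have hab : a < b := ord a b (by omega) (by omega)
  have hpm : p.val = m := by
    by_contra hne
    obtain ⟨c, hc⟩ := σ.surjective ⟨m - 1, by omega⟩
    have hc' : (σ c).val = m - 1 := by rw [hc]
    have hca : c < a := ord c a (by omega) (by omega)
    exact h2 0 c.succ a.succ b.succ (Fin.succ_pos _) (by simpa using hca) (by simpa using hab)
      (up a (by omega)) ((ins_succ_lt ..).2 (by omega)) ((ins_succ_lt ..).2 (by omega))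
  refine ⟨hpm, ?_⟩
  by_contra hne
  have ha0 : 0 < a := by
    rw [Fin.pos_iff_ne_zero]
    rintro rfl
    exact hne ha'
  have h0b : (σ 0).val ≠ m + 1 := by
    intro h
    have : (0 : Fin (m + 2)) = b := σ.injective (Fin.ext (by omega))
    subst this
    exact absurd hab (Fin.not_lt_zero _)
  have := (σ 0).isLt
  exact h2 0 (Fin.succ 0) a.succ b.succ (Fin.succ_pos _) (Fin.succ_lt_succ_iff.2 ha0)
    (by simpa using hab) (up a (by omega)) ((ins_succ_lt ..).2 (by omega))
    ((ins_succ_lt ..).2 (by omega))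

/-- The count. -/
noncomputable def cnt (n : ℕ) : ℕ := Nat.card {π : Equiv.Perm (Fin n) // Good π}

/-- The map of the recurrence. -/
def recMap (m : ℕ) :
    ({σ : Equiv.Perm (Fin (m + 2)) // Good σ} ⊕ {σ : Equiv.Perm (Fin (m + 2)) // Good σ}) ⊕
      {τ : Equiv.Perm (Fin (m + 1)) // Good τ} → {π : Equiv.Perm (Fin (m + 3)) // Good π}
  | Sum.inl (Sum.inl σ) => ⟨ins ⟨m + 2, by omega⟩ σ.1, good_ins_top σ.2 (by simp)⟩
  | Sum.inl (Sum.inr σ) => ⟨ins ⟨m + 1, by omega⟩ σ.1, good_ins_top σ.2 (by simp)⟩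
  | Sum.inr τ => ⟨ins ⟨m, by omega⟩ (ins ⟨m, by omega⟩ τ.1), good_ins_two τ.2 rfl rfl⟩

theorem recMap_bij (m : ℕ) : Function.Bijective (recMap m) := by
  constructor
  · rintro ((⟨σ, hσ⟩ | ⟨σ, hσ⟩) | ⟨σ, hσ⟩) ((⟨τ, hτ⟩ | ⟨τ, hτ⟩) | ⟨τ, hτ⟩) h <;>
      simp only [recMap, Subtype.mk.injEq] at h <;>
      obtain ⟨h1, h2⟩ := ins_inj h <;> simp at h1
    · simp [h2]
    · simp [h2]
    · obtain ⟨_, h3⟩ := ins_inj h2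
      simp [h3]
  · rintro ⟨π, hπ⟩
    obtain ⟨p, σ, rfl⟩ := ins_surj π
    have hpl := p.isLt
    by_cases hp : p.val ≤ m
    · obtain ⟨h1, h2⟩ := exhaust hπ hp
      obtain ⟨q, τ, rfl⟩ := ins_surj σ
      rw [ins_zero] at h2
      refine ⟨Sum.inr ⟨τ, good_of_ins (good_of_ins hπ)⟩, ?_⟩
      have e1 : (⟨m, by clear h1; omega⟩ : Fin (m + 3)) = p := Fin.ext h1.symm
      have e2 : (⟨m, by clear h2; omega⟩ : Fin (m + 2)) = q := Fin.ext h2.symm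
      apply Subtype.ext
      simp only [recMap, e1, e2]
    · by_cases hp2 : p.val = m + 1
      · refine ⟨Sum.inl (Sum.inr ⟨σ, good_of_ins hπ⟩), ?_⟩
        have e1 : (⟨m + 1, by omega⟩ : Fin (m + 3)) = p := Fin.ext (by simp; omega)
        apply Subtype.ext
        simp only [recMap, e1]
      · refine ⟨Sum.inl (Sum.inl ⟨σ, good_of_ins hπ⟩), ?_⟩
        have e1 : (⟨m + 2, by omega⟩ : Fin (m + 3)) = p := Fin.ext (by simp; omega)
        apply Subtype.ext
        simp only [recMap, e1]

theorem cnt_rec (m : ℕ) : cnt (m + 3) = 2 * cnt (m + 2) + cnt (m + 1) := by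
  unfold cnt
  rw [← Nat.card_congr (Equiv.ofBijective _ (recMap_bij m)), Nat.card_sum, Nat.card_sum]
  ring

theorem cnt_small (n : ℕ) (hn : n ≤ 2) : cnt n = n.factorial := by
  have h : ∀ π : Equiv.Perm (Fin n), Good π := by
    intro π
    constructor
    · intro i j k hij hjk
      rw [Fin.lt_def] at hij hjk
      omega
    · intro i j k l hij hjk
      rw [Fin.lt_def] at hij hjk
      omega
  unfold cnt
  rw [Nat.card_congr (Equiv.subtypeUnivEquiv h), Nat.card_eq_fintype_card, Fintype.card_perm,
    Fintype.card_fin]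

/-- The generating function `F` for permutations avoiding `132`, `1234`
and `2134` satisfies `(1 − 2X − X²)·F = 1 − X − X²`. -/
theorem stmt12 :
    ((1 : PowerSeries ℚ) - 2 * PowerSeries.X - PowerSeries.X ^ 2)
      * (PowerSeries.mk fun n => ((Nat.card {π : Equiv.Perm (Fin n) //
          ¬ Contains p132 π ∧ ¬ Contains p1234 π ∧ ¬ Contains p2134 π} : ℕ) : ℚ))
      = 1 - PowerSeries.X - PowerSeries.X ^ 2 := by
  have e : (fun n => ((Nat.card {π : Equiv.Perm (Fin n) //
          ¬ Contains p132 π ∧ ¬ Contains p1234 π ∧ ¬ Contains p2134 π} : ℕ) : ℚ))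
      = fun n => (cnt n : ℚ) := by
    funext n
    simp only [good_iff, cnt]
  rw [e]
  have c0 : cnt 0 = 1 := cnt_small 0 (by omega)
  have c1 : cnt 1 = 1 := cnt_small 1 (by omega)
  have c2 : cnt 2 = 2 := cnt_small 2 (by omega)
  have e2 : ((1 : PowerSeries ℚ) - 2 * PowerSeries.X - PowerSeries.X ^ 2)
      * (PowerSeries.mk fun n => (cnt n : ℚ))
      = PowerSeries.mk (fun n => (cnt n : ℚ))
        - PowerSeries.X * PowerSeries.mk (fun n => (cnt n : ℚ))
        - PowerSeries.X * PowerSeries.mk (fun n => (cnt n : ℚ))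
        - PowerSeries.X * (PowerSeries.X * PowerSeries.mk (fun n => (cnt n : ℚ))) := by
    ring
  rw [e2]
  ext n
  rcases n with _ | _ | _ | m
  · simp [c0]
  · simp [PowerSeries.coeff_succ_X_mul, PowerSeries.coeff_X, PowerSeries.coeff_X_pow,
      PowerSeries.coeff_one, c0, c1]
  · simp [PowerSeries.coeff_succ_X_mul, PowerSeries.coeff_X, PowerSeries.coeff_X_pow,
      PowerSeries.coeff_one, c0, c1, c2]
    try norm_num
  · have := cnt_rec m
    simp [PowerSeries.coeff_succ_X_mul, PowerSeries.coeff_X, PowerSeries.coeff_X_pow,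
      PowerSeries.coeff_one, this]
    try ring
end

section
/- Let k ≥ 1 and let F(X) = Σ_{n≥0} |{π ∈ S_n : π avoids 132 and avoids the increasing pattern 12⋯k}|·Xⁿ ∈ ℚ⟦X⟧. Then F(X)·p_k(X) = p_{k−1}(X). (Equivalently, F(x) = U_{k−1}(1/(2√x)) / (√x·U_k(1/(2√x))).) -/
/-- `pU (m+1)` is the polynomial `p_m(X) = X^{m/2}·U_m(1/(2√X))` built from the Chebyshev
recurrence: `pU 0 = p_{−1} = 0`, `pU 1 = p_0 = 1`, and `p_{m+1} = p_m − X·p_{m−1}`. -/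
noncomputable def pU : ℕ → Polynomial ℚ
  | 0 => 0
  | 1 => 1
  | m + 2 => pU (m + 1) - Polynomial.X * pU m

structure Good_s14 (k n : ℕ) (f : ℕ → ℕ) : Prop where
  lt : ∀ i, i < n → f i < n
  inj : ∀ i j, i < n → j < n → f i = f j → i = j
  zero : ∀ i, n ≤ i → f i = 0
  av : ∀ a b c, a < b → b < c → c < n → f a < f c → f c < f b → False
  inc : ∀ S : Finset ℕ, (∀ i ∈ S, i < n) → (∀ a ∈ S, ∀ b ∈ S, a < b → f a < f b) → S.card < k

def glue (p q : ℕ) (L R : ℕ → ℕ) (i : ℕ) : ℕ :=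
  if i < p then L i + q else if i = p then p + q else if i ≤ p + q then R (i - p - 1) else 0

theorem glue_left {p q i : ℕ} {L R : ℕ → ℕ} (h : i < p) : glue p q L R i = L i + q := by
  simp [glue, h]

theorem glue_mid {p q : ℕ} {L R : ℕ → ℕ} : glue p q L R p = p + q := by
  simp [glue]

theorem glue_right {p q i : ℕ} {L R : ℕ → ℕ} (h : i < q) : glue p q L R (p + 1 + i) = R i := by
  have h1 : ¬ (p + 1 + i < p) := by omega
  have h2 : ¬ (p + 1 + i = p) := by omega
  have h3 : p + 1 + i ≤ p + q := by omega
  have h4 : p + 1 + i - p - 1 = i := by omega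
  simp only [glue, h1, h2, h3, h4, if_true, if_false]

theorem glue_out {p q i : ℕ} {L R : ℕ → ℕ} (h : p + q < i) : glue p q L R i = 0 := by
  have h1 : ¬ (i < p) := by omega
  have h2 : ¬ (i = p) := by omega
  have h3 : ¬ (i ≤ p + q) := by omega
  simp only [glue, h1, h2, h3, if_false]

theorem cases3 (p q i : ℕ) (h : i < p + q + 1) :
    i < p ∨ i = p ∨ ∃ r, r < q ∧ i = p + 1 + r := by
  rcases lt_trichotomy i p with h1 | h1 | h1
  · exact Or.inl h1
  · exact Or.inr (Or.inl h1)
  · exact Or.inr (Or.inr ⟨i - p - 1, by omega, by omega⟩)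

theorem glue_good {k p q : ℕ} {L R : ℕ → ℕ} (hL : Good_s14 k p L) (hR : Good_s14 (k+1) q R) :
    Good_s14 (k+1) (p+q+1) (glue p q L R) := by
  refine ⟨?_, ?_, ?_, ?_, ?_⟩
  · intro i hi
    rcases cases3 p q i hi with h | rfl | ⟨r, h, rfl⟩
    · rw [glue_left h]; have := hL.lt i h; omega
    · rw [glue_mid]; omega
    · rw [glue_right h]; have := hR.lt r h; omega
  · intro i j hi hj e
    rcases cases3 p q i hi with h | h | ⟨r, h, rfl⟩ <;>
    rcases cases3 p q j hj with h' | h' | ⟨r', h', rfl⟩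
    · rw [glue_left h, glue_left h'] at e; exact hL.inj i j h h' (by omega)
    · subst h'; rw [glue_left h, glue_mid] at e; have := hL.lt i h; omega
    · rw [glue_left h, glue_right h'] at e; have := hR.lt r' h'; omega
    · subst h; rw [glue_left h', glue_mid] at e; have := hL.lt j h'; omega
    · omega
    · subst h; rw [glue_right h', glue_mid] at e; have := hR.lt r' h'; omega
    · rw [glue_left h', glue_right h] at e; have := hR.lt r h; omega
    · subst h'; rw [glue_right h, glue_mid] at e; have := hR.lt r h; omega
    · rw [glue_right h, glue_right h'] at e; rw [hR.inj r r' h h' e]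
  · intro i hi; exact glue_out (by omega)
  · intro a b c hab hbc hc h1 h2
    rcases cases3 p q c hc with h | rfl | ⟨r, h, rfl⟩
    · rw [glue_left (by omega : a < p), glue_left h] at h1
      rw [glue_left (by omega : b < p), glue_left h] at h2
      exact hL.av a b c hab hbc h (by omega) (by omega)
    · rw [glue_left hbc, glue_mid] at h2
      have := hL.lt b hbc; omega
    · rw [glue_right h] at h1 h2
      have hr := hR.lt r h
      rcases cases3 p q a (by omega) with h' | rfl | ⟨r', h', rfl⟩
      · rw [glue_left h'] at h1; omega
      · rw [glue_mid] at h1; omega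
      · obtain ⟨s, rfl⟩ : ∃ s, b = p + 1 + s := ⟨b - p - 1, by omega⟩
        rw [glue_right h'] at h1
        rw [glue_right (by omega)] at h2
        exact hR.av r' s r (by omega) (by omega) h h1 h2
  · intro S hS hm
    by_cases hl : ∃ a ∈ S, a < p
    · obtain ⟨a, ha, hap⟩ := hl
      have hSub : ∀ i ∈ S, i ≤ p := by
        intro i hi
        rcases cases3 p q i (hS i hi) with h | rfl | ⟨r, h, rfl⟩
        · omega
        · omega
        · have := hm a ha _ hi (by omega)
          rw [glue_left hap, glue_right h] at this
          have := hR.lt r h; omega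
      have h1 : (S.erase p).card < k := by
        apply hL.inc
        · intro i hi
          have := hSub i (Finset.mem_of_mem_erase hi)
          have := Finset.ne_of_mem_erase hi
          omega
        · intro x hx y hy hxy
          have hx1 := hSub x (Finset.mem_of_mem_erase hx)
          have hx2 := Finset.ne_of_mem_erase hx
          have hy1 := hSub y (Finset.mem_of_mem_erase hy)
          have hy2 := Finset.ne_of_mem_erase hy
          have := hm x (Finset.mem_of_mem_erase hx) y (Finset.mem_of_mem_erase hy) hxy
          rw [glue_left (by omega), glue_left (by omega)] at this
          omega
      have := Finset.pred_card_le_card_erase (s := S) (a := p)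
      omega
    · push Not at hl
      have hk : 0 < k := by
        simpa using hL.inc ∅ (by simp) (by simp)
      by_cases hp : p ∈ S
      · have : S ⊆ {p} := by
          intro i hi
          rcases cases3 p q i (hS i hi) with h | rfl | ⟨r, h, rfl⟩
          · have := hl i hi; omega
          · simp
          · have := hm p hp _ hi (by omega)
            rw [glue_mid, glue_right h] at this
            have := hR.lt r h; omega
        have := Finset.card_le_card this
        simp at this
        omega
      · have hge : ∀ i ∈ S, ∃ r, r < q ∧ i = p + 1 + r := by
          intro i hi
          rcases cases3 p q i (hS i hi) with h | rfl | h
          · have := hl i hi; omega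
          · exact absurd hi hp
          · exact h
        have hc : (S.image (fun i => i - (p+1))).card = S.card := by
          apply Finset.card_image_of_injOn
          intro x hx y hy hxy
          obtain ⟨r, h, rfl⟩ := hge x hx
          obtain ⟨r', h', rfl⟩ := hge y hy
          simp at hxy
          omega
        rw [← hc]
        apply hR.inc
        · intro i hi
          obtain ⟨x, hx, rfl⟩ := Finset.mem_image.1 hi
          obtain ⟨r, h, rfl⟩ := hge x hx
          simpa using h
        · intro a ha b hb hab
          obtain ⟨x, hx, rfl⟩ := Finset.mem_image.1 ha
          obtain ⟨y, hy, rfl⟩ := Finset.mem_image.1 hb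
          have := hm x hx y hy (by omega)
          obtain ⟨r, h, rfl⟩ := hge x hx
          obtain ⟨r', h', rfl⟩ := hge y hy
          rw [glue_right h, glue_right h'] at this
          simpa using this

theorem exists_max {k n : ℕ} {f : ℕ → ℕ} (hf : Good_s14 k (n+1) f) : ∃ p, p ≤ n ∧ f p = n := by
  have h : (Finset.range (n+1)).image f = Finset.range (n+1) := by
    apply Finset.eq_of_subset_of_card_le
    · intro x hx
      obtain ⟨i, hi, rfl⟩ := Finset.mem_image.1 hx
      exact Finset.mem_range.2 (hf.lt i (Finset.mem_range.1 hi))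
    · rw [Finset.card_image_of_injOn]
      intro x hx y hy hxy
      simp at hx hy
      exact hf.inj x y (by omega) (by omega) hxy
  have : n ∈ (Finset.range (n+1)).image f := by rw [h]; simp
  obtain ⟨p, hp, e⟩ := Finset.mem_image.1 this
  exact ⟨p, by simp at hp; omega, e⟩

theorem unglue {k n : ℕ} {f : ℕ → ℕ} (hf : Good_s14 (k+1) (n+1) f) :
    ∃ p q L R, p + q = n ∧ Good_s14 k p L ∧ Good_s14 (k+1) q R ∧ glue p q L R = f := by
  obtain ⟨p, hp, e⟩ := exists_max hf
  obtain ⟨q, rfl⟩ := Nat.exists_eq_add_of_le hp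
  have hlt : ∀ i, i < p + q + 1 → i ≠ p → f i < p + q := by
    intro i hi hne
    have := hf.lt i hi
    have : f i ≠ p + q := fun h => hne (hf.inj i p hi (by omega) (by omega))
    omega
  have key : ∀ a c, a < p → p < c → c < p + q + 1 → f c < f a := by
    intro a c ha hc hcn
    by_contra hh
    have h1 : f a ≠ f c := fun h => by
      have := hf.inj a c (by omega) hcn h
      omega
    have := hlt c hcn (by omega)
    exact hf.av a p c ha hc hcn (by omega) (by omega)
  have hl : ∀ a, a < p → q ≤ f a := by
    intro a ha
    have h : ((Finset.Ioo p (p+q+1)).image f) ⊆ Finset.range (f a) := by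
      intro x hx
      obtain ⟨i, hi, rfl⟩ := Finset.mem_image.1 hx
      rw [Finset.mem_Ioo] at hi
      exact Finset.mem_range.2 (key a i ha hi.1 hi.2)
    have h2 := Finset.card_le_card h
    rw [Finset.card_image_of_injOn] at h2
    · simp at h2; omega
    · intro x hx y hy hxy
      simp at hx hy
      exact hf.inj x y (by omega) (by omega) hxy
  have hr : ∀ c, p < c → c < p + q + 1 → f c < q := by
    intro c hc hcn
    have h : ((Finset.range p).image f) ⊆ Finset.Ioo (f c) (p+q) := by
      intro x hx
      obtain ⟨i, hi, rfl⟩ := Finset.mem_image.1 hx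
      rw [Finset.mem_range] at hi
      exact Finset.mem_Ioo.2 ⟨key i c hi hc hcn, hlt i (by omega) (by omega)⟩
    have h2 := Finset.card_le_card h
    rw [Finset.card_image_of_injOn] at h2
    · simp at h2
      have := hlt c hcn (by omega)
      omega
    · intro x hx y hy hxy
      simp at hx hy
      exact hf.inj x y (by omega) (by omega) hxy
  refine ⟨p, q, fun i => if i < p then f i - q else 0,
    fun i => if i < q then f (p + 1 + i) else 0, rfl, ?_, ?_, ?_⟩
  · refine ⟨?_, ?_, ?_, ?_, ?_⟩
    · intro i hi
      have := hl i hi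
      have := hlt i (by omega) (by omega)
      simp only [hi, if_true]; omega
    · intro i j hi hj h
      simp only [hi, hj, if_true] at h
      have := hl i hi
      have := hl j hj
      exact hf.inj i j (by omega) (by omega) (by omega)
    · intro i hi
      simp [hi]
    · intro a b c hab hbc hc h1 h2
      have ha' : a < p := by omega
      have hb' : b < p := by omega
      simp only [ha', hb', hc, if_true] at h1 h2
      exact hf.av a b c hab hbc (by omega) (by omega) (by omega)
    · intro S hS hm
      have hpS : p ∉ S := fun h => by have := hS p h; omega
      have := hf.inc (insert p S) (by
        intro i hi
        rcases Finset.mem_insert.1 hi with rfl | hi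
        · omega
        · have := hS i hi; omega) (by
        intro a ha b hb hab
        rcases Finset.mem_insert.1 ha with rfl | ha
        · rcases Finset.mem_insert.1 hb with rfl | hb
          · omega
          · have := hS b hb; omega
        · have ha' := hS a ha
          rcases Finset.mem_insert.1 hb with rfl | hb
          · rw [e]; exact hlt a (by omega) (by omega)
          · have hb' := hS b hb
            have := hm a ha b hb hab
            simp only [ha', hb', if_true] at this
            omega)
      rw [Finset.card_insert_of_notMem hpS] at this
      omega
  · refine ⟨?_, ?_, ?_, ?_, ?_⟩
    · intro i hi
      simp only [hi, if_true]
      exact hr _ (by omega) (by omega)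
    · intro i j hi hj h
      simp only [hi, hj, if_true] at h
      have := hf.inj _ _ (by omega) (by omega) h
      omega
    · intro i hi
      simp [hi]
    · intro a b c hab hbc hc h1 h2
      have ha' : a < q := by omega
      have hb' : b < q := by omega
      simp only [ha', hb', hc, if_true] at h1 h2
      exact hf.av _ _ _ (by omega) (by omega) (by omega) h1 h2
    · intro S hS hm
      have := hf.inc (S.image (fun i => p + 1 + i)) (by
        intro i hi
        obtain ⟨x, hx, rfl⟩ := Finset.mem_image.1 hi
        have := hS x hx; omega) (by
        intro a ha b hb hab
        obtain ⟨x, hx, rfl⟩ := Finset.mem_image.1 ha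
        obtain ⟨y, hy, rfl⟩ := Finset.mem_image.1 hb
        have hx' := hS x hx
        have hy' := hS y hy
        have := hm x hx y hy (by omega)
        simpa only [hx', hy', if_true] using this)
      rwa [Finset.card_image_of_injective _ (fun x y h => by simpa using h)] at this
  · funext i
    by_cases hi : i < p + q + 1
    · rcases cases3 p q i hi with h | rfl | ⟨r, h, rfl⟩
      · rw [glue_left h]; have := hl i h; simp only [h, if_true]; omega
      · rw [glue_mid, e]
      · rw [glue_right h]; simp only [h, if_true]
    · rw [glue_out (by omega), hf.zero i (by omega)]

theorem glue_inj {k n p q p' q' : ℕ} {L R L' R' : ℕ → ℕ} (h : p + q = n) (h' : p' + q' = n)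
    (hL : Good_s14 k p L) (hR : Good_s14 (k+1) q R) (hL' : Good_s14 k p' L') (hR' : Good_s14 (k+1) q' R')
    (e : glue p q L R = glue p' q' L' R') : p = p' ∧ q = q' ∧ L = L' ∧ R = R' := by
  have hp : p = p' := by
    apply (glue_good hL hR).inj p p' (by omega) (by omega)
    rw [glue_mid, e, glue_mid]; omega
  subst hp
  have hq : q = q' := by omega
  subst hq
  refine ⟨rfl, rfl, ?_, ?_⟩
  · funext i
    by_cases hi : i < p
    · have := congrFun e i
      rw [glue_left hi, glue_left hi] at this
      omega
    · rw [hL.zero i (by omega), hL'.zero i (by omega)]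
  · funext i
    by_cases hi : i < q
    · have := congrFun e (p + 1 + i)
      rwa [glue_right hi, glue_right hi] at this
    · rw [hR.zero i (by omega), hR'.zero i (by omega)]

theorem contains132 {n : ℕ} (π : Equiv.Perm (Fin n)) :
    Contains p132 π ↔ ∃ a b c, a < b ∧ b < c ∧ π a < π c ∧ π c < π b := by
  have e0 : p132 0 = 0 := rfl
  have e1 : p132 1 = 2 := rfl
  have e2 : p132 2 = 1 := rfl
  constructor
  · rintro ⟨f, hf, h⟩
    refine ⟨f 0, f 1, f 2, hf (by decide), hf (by decide), (h 0 2).1 ?_, (h 2 1).1 ?_⟩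
    · rw [e0, e2]; decide
    · rw [e1, e2]; decide
  · rintro ⟨a, b, c, hab, hbc, h1, h2⟩
    refine ⟨![a, b, c], ?_, ?_⟩
    · rw [Fin.strictMono_iff_lt_succ]
      intro i
      fin_cases i
      · exact hab
      · exact hbc
    · have h3 := h1.trans h2
      intro x y
      fin_cases x <;> fin_cases y <;>
        simp [e0, e1, e2, h1, h2, h3, h1.le, h2.le, h3.le]

theorem containsInc {k n : ℕ} (π : Equiv.Perm (Fin n)) :
    Contains (1 : Equiv.Perm (Fin k)) π ↔
      ∃ S : Finset (Fin n), k ≤ S.card ∧ ∀ a ∈ S, ∀ b ∈ S, a < b → π a < π b := by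
  constructor
  · rintro ⟨f, hf, h⟩
    refine ⟨Finset.univ.image f, ?_, ?_⟩
    · rw [Finset.card_image_of_injective _ hf.injective]; simp
    · intro a ha b hb hab
      obtain ⟨x, -, rfl⟩ := Finset.mem_image.1 ha
      obtain ⟨y, -, rfl⟩ := Finset.mem_image.1 hb
      exact (h x y).1 (hf.lt_iff_lt.1 hab)
  · rintro ⟨S, hS, h⟩
    obtain ⟨T, hT, hc⟩ := Finset.exists_subset_card_eq hS
    have hm : StrictMono (fun i => π (T.orderEmbOfFin hc i)) := by
      intro a b hab
      exact h _ (hT (T.orderEmbOfFin_mem hc a)) _ (hT (T.orderEmbOfFin_mem hc b))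
        ((T.orderEmbOfFin hc).strictMono hab)
    exact ⟨T.orderEmbOfFin hc, (T.orderEmbOfFin hc).strictMono, fun a b => hm.lt_iff_lt.symm⟩

def ext0 {n : ℕ} (π : Equiv.Perm (Fin n)) (i : ℕ) : ℕ := if h : i < n then π ⟨i, h⟩ else 0

theorem ext0_val {n : ℕ} (π : Equiv.Perm (Fin n)) (i : Fin n) : ext0 π i = π i := by
  simp [ext0]

theorem ext0_good {k n : ℕ} (π : Equiv.Perm (Fin n)) :
    Good_s14 k n (ext0 π) ↔ (¬ Contains p132 π ∧ ¬ Contains (1 : Equiv.Perm (Fin k)) π) := by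
  rw [contains132, containsInc]
  constructor
  · intro h
    constructor
    · rintro ⟨a, b, c, hab, hbc, h1, h2⟩
      refine h.av a b c hab hbc c.2 ?_ ?_ <;> simpa only [ext0_val] using by assumption
    · rintro ⟨S, hS, hm⟩
      have := h.inc (S.map Fin.valEmbedding) (by
        intro i hi
        obtain ⟨x, hx, rfl⟩ := Finset.mem_map.1 hi
        exact x.2) (by
        intro a ha b hb hab
        obtain ⟨x, hx, rfl⟩ := Finset.mem_map.1 ha
        obtain ⟨y, hy, rfl⟩ := Finset.mem_map.1 hb
        have := hm x hx y hy hab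
        simpa only [Fin.valEmbedding_apply, ext0_val, Fin.val_fin_lt] using this)
      rw [Finset.card_map] at this
      omega
  · rintro ⟨h1, h2⟩
    refine ⟨?_, ?_, ?_, ?_, ?_⟩
    · intro i hi
      simp [ext0, hi]
    · intro i j hi hj h
      simp only [ext0, hi, hj, dif_pos] at h
      simpa using π.injective (Fin.ext h)
    · intro i hi
      simp [ext0, hi]
    · intro a b c hab hbc hc h3 h4
      have hb : b < n := by omega
      have ha : a < n := by omega
      simp only [ext0, ha, hb, hc, dif_pos] at h3 h4
      exact h1 ⟨⟨a, ha⟩, ⟨b, hb⟩, ⟨c, hc⟩, hab, hbc, h3, h4⟩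
    · intro S hS hm
      by_contra hk
      refine h2 ⟨S.attachFin hS, by rw [Finset.card_attachFin]; omega, ?_⟩
      intro a ha b hb hab
      rw [Finset.mem_attachFin] at ha hb
      have := hm a ha b hb hab
      simpa only [ext0_val, Fin.val_fin_lt] using this

theorem ext0_bij (k n : ℕ) : Function.Bijective
    (fun π : {π : Equiv.Perm (Fin n) //
        ¬ Contains p132 π ∧ ¬ Contains (1 : Equiv.Perm (Fin k)) π} =>
      (⟨ext0 π.1, (ext0_good π.1).2 π.2⟩ : {f // Good_s14 k n f})) := by
  constructor
  · rintro ⟨π, h⟩ ⟨σ, h'⟩ e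
    have e' : ext0 π = ext0 σ := congrArg Subtype.val e
    apply Subtype.ext
    apply Equiv.ext
    intro i
    apply Fin.ext
    show ((π i : Fin n) : ℕ) = σ i
    rw [← ext0_val, ← ext0_val, e']
  · rintro ⟨f, hf⟩
    let g : Fin n → Fin n := fun i => ⟨f i, hf.lt i i.2⟩
    have hg : Function.Injective g := by
      intro a b hab
      exact Fin.ext (hf.inj a b a.2 b.2 (congrArg Fin.val hab))
    let π : Equiv.Perm (Fin n) := Equiv.ofBijective g (Finite.injective_iff_bijective.1 hg)
    have e : ext0 π = f := by
      funext i
      by_cases hi : i < n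
      · simp [ext0, hi, π, g]
      · simp [ext0, hi, hf.zero i (by omega)]
    exact ⟨⟨π, (ext0_good π).1 (e ▸ hf)⟩, Subtype.ext e⟩

theorem card_eq (k n : ℕ) : Nat.card {π : Equiv.Perm (Fin n) //
        ¬ Contains p132 π ∧ ¬ Contains (1 : Equiv.Perm (Fin k)) π} = Nat.card {f // Good_s14 k n f} :=
  Nat.card_eq_of_bijective _ (ext0_bij k n)

instance (k n : ℕ) : Finite {f // Good_s14 k n f} :=
  Finite.of_surjective _ (ext0_bij k n).2

theorem card_succ (k n : ℕ) : Nat.card {f // Good_s14 (k+1) (n+1) f} =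
    ∑ p ∈ Finset.HasAntidiagonal.antidiagonal n, Nat.card {f // Good_s14 k p.1 f} * Nat.card {f // Good_s14 (k+1) p.2 f} := by
  rw [← Finset.sum_coe_sort]
  simp_rw [← Nat.card_prod]
  rw [← Nat.card_sigma]
  symm
  apply Nat.card_eq_of_bijective (fun x : (Σ p : Finset.HasAntidiagonal.antidiagonal n,
      {f // Good_s14 k p.1.1 f} × {f // Good_s14 (k+1) p.1.2 f}) =>
    (⟨glue x.1.1.1 x.1.1.2 x.2.1.1 x.2.2.1, by
      have h := glue_good x.2.1.2 x.2.2.2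
      rwa [Finset.HasAntidiagonal.mem_antidiagonal.1 x.1.2] at h⟩ : {f // Good_s14 (k+1) (n+1) f}))
  constructor
  · rintro ⟨⟨⟨p, q⟩, h⟩, ⟨L, hL⟩, ⟨R, hR⟩⟩ ⟨⟨⟨p', q'⟩, h'⟩, ⟨L', hL'⟩, ⟨R', hR'⟩⟩ e
    have e' : glue p q L R = glue p' q' L' R' := congrArg Subtype.val e
    obtain ⟨rfl, rfl, rfl, rfl⟩ := glue_inj (Finset.HasAntidiagonal.mem_antidiagonal.1 h)
      (Finset.HasAntidiagonal.mem_antidiagonal.1 h') hL hR hL' hR' e'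
    rfl
  · rintro ⟨f, hf⟩
    obtain ⟨p, q, L, R, h, hL, hR, e⟩ := unglue hf
    exact ⟨⟨⟨⟨p, q⟩, Finset.HasAntidiagonal.mem_antidiagonal.2 h⟩, ⟨L, hL⟩, ⟨R, hR⟩⟩, Subtype.ext e⟩

theorem card_zero (k : ℕ) : Nat.card {f // Good_s14 (k+1) 0 f} = 1 := by
  rw [Nat.card_eq_one_iff_exists]
  refine ⟨⟨fun _ => 0, ⟨by simp, by simp, by simp, by simp, ?_⟩⟩, ?_⟩
  · intro S hS _
    have : S = ∅ := Finset.eq_empty_of_forall_notMem fun i hi => by simpa using hS i hi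
    simp [this]
  · rintro ⟨f, hf⟩
    exact Subtype.ext (funext fun i => hf.zero i (by omega))

theorem card_k0 (n : ℕ) : Nat.card {f // Good_s14 0 n f} = 0 := by
  have : IsEmpty {f // Good_s14 0 n f} := ⟨fun f => by simpa using f.2.inc ∅ (by simp) (by simp)⟩
  simp

noncomputable def FF (k : ℕ) : PowerSeries ℚ :=
  PowerSeries.mk fun n => ((Nat.card {f // Good_s14 k n f} : ℕ) : ℚ)

theorem FF_zero : FF 0 = 0 := by
  ext n
  simp only [FF, PowerSeries.coeff_mk, card_k0]
  simp

theorem FF_succ (k : ℕ) : FF (k+1) = 1 + PowerSeries.X * (FF k * FF (k+1)) := by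
  ext n
  cases n with
  | zero => simp [FF, card_zero]
  | succ n =>
    rw [map_add, PowerSeries.coeff_succ_X_mul, PowerSeries.coeff_mul]
    simp only [FF, PowerSeries.coeff_mk, card_succ, PowerSeries.coeff_one]
    push_cast
    simp

theorem FF_main (k : ℕ) : FF k * (pU (k+1) : PowerSeries ℚ) = (pU k : PowerSeries ℚ) := by
  induction k with
  | zero => simp [FF_zero, pU]
  | succ k ih =>
    have h := FF_succ k
    have e : (pU (k+2) : PowerSeries ℚ) =
        (pU (k+1) : PowerSeries ℚ) - PowerSeries.X * (pU k : PowerSeries ℚ) := by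
      simp [pU]
    rw [e, ← ih]
    linear_combination (pU (k+1) : PowerSeries ℚ) * h


/-- For `k ≥ 1`, the generating function `F` for `132`-avoiding
permutations also avoiding the increasing pattern `12⋯k` (the identity of `S_k`)
satisfies `F·p_k = p_{k−1}` (here `pU (m+1) = p_m`). -/
theorem stmt14 (k : ℕ) (hk : 1 ≤ k) :
    (PowerSeries.mk fun n => ((Nat.card {π : Equiv.Perm (Fin n) //
        ¬ Contains p132 π ∧ ¬ Contains (1 : Equiv.Perm (Fin k)) π} : ℕ) : ℚ))
      * (pU (k + 1) : PowerSeries ℚ) = (pU k : PowerSeries ℚ) := by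
  simp only [card_eq]
  exact FF_main k
end
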